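/- Let X, Y be Banach spaces and T : Y → X a bounded linear operator. Then the following are equivalent: (1) T is a compact operator with dense range; (2) for every bounded Lipschitz everywhere Gâteaux differentiable function f : X → ℝ, the composition f ∘ T is bounded, Lipschitz, and everywhere Fréchet differentiable, and moreover the map f ↦ f ∘ T is injective on the set of bounded Lipschitz everywhere Gâteaux differentiable functions on X. -/

import Mathlib

open Filter Metric Topology

section Defs
variable {X Z : Type*} [NormedAddCommGroup X] [NormedSpace ℝ X]
  [NormedAddCommGroup Z] [NormedSpace ℝ Z]

/-- `A` is the Gâteaux derivative of `f` at `x`. -/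
def HasGateauxDerivAt (f : X → Z) (A : X →L[ℝ] Z) (x : X) : Prop :=
  ∀ h : X, Tendsto (fun t : ℝ => t⁻¹ • (f (x + t • h) - f x)) (𝓝[≠] (0 : ℝ)) (𝓝 (A h))

/-- `f` is Gâteaux differentiable at `x`. -/
def GateauxDifferentiableAt (f : X → Z) (x : X) : Prop :=
  ∃ A : X →L[ℝ] Z, HasGateauxDerivAt f A x

/-- Membership in `C_b^G(X)`: bounded, Lipschitz and everywhere Gâteaux differentiable. -/
def MemCbG (f : X → ℝ) : Prop :=
  (∃ C : ℝ, ∀ x, |f x| ≤ C) ∧ (∃ K : NNReal, LipschitzWith K f) ∧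
    ∀ x, GateauxDifferentiableAt f x

/-- Membership in `C_b^F(X)`: bounded, Lipschitz and everywhere Fréchet differentiable. -/
def MemCbF (f : X → ℝ) : Prop :=
  (∃ C : ℝ, ∀ x, |f x| ≤ C) ∧ (∃ K : NNReal, LipschitzWith K f) ∧ Differentiable ℝ f
end Defs

/-- The best Lipschitz constant of `f`: the supremum of `|f x - f x'| / ‖x - x'‖` over
all pairs (the quotient is interpreted as `0` when `x = x'`). -/
noncomputable def bestLip {X : Type*} [NormedAddCommGroup X] (f : X → ℝ) : ℝ :=
  sSup (Set.range fun p : X × X => |f p.1 - f p.2| / ‖p.1 - p.2‖)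

/-!
The difference quotients of a Lipschitz function are equi-Lipschitz, so they converge to the
Gâteaux derivative uniformly on totally bounded sets. If `T` maps the unit ball onto such a set,
then this uniformity is Fréchet differentiability of `f ∘ T`.

Otherwise there are bounded `y n` and functionals `φ n` of norm at most one with
`φ n (T (y n)) = 1` and `φ j (T (y n))` small for all `j < n`. For a null sequence `t n > 0`, put
around `3 * t n • T (y n)` a smooth bump of height `t n` that depends on `φ 0, …, φ n` only and is
supported where `φ n > 2 * t n` and `|φ j| < t n` for all `j < n`. These bumps are disjoint and
uniformly Lipschitz; let `f` be their sum. Off the common kernel of the `φ n` the sum is locally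
finite. On the kernel, every line through a point avoids all the bumps near that point, so that the
Gâteaux derivative vanishes, but no neighbourhood does: `f ∘ T` takes the value `t n` at
`3 * t n • y n`, hence is not Fréchet differentiable at `0`.

If the range of `T` is not dense, some functional `φ ≠ 0` vanishes on it, and `sin ∘ φ` and `0` have
the same composition with `T`.
-/

section GateauxDerivative
variable {X Y Z : Type*} [NormedAddCommGroup X] [NormedSpace ℝ X]
  [NormedAddCommGroup Y] [NormedSpace ℝ Y] [NormedAddCommGroup Z] [NormedSpace ℝ Z]
  {f : X → Z} {A B : X →L[ℝ] Z} {x : X}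

theorem hasGateauxDerivAt_iff_hasLineDerivAt :
    HasGateauxDerivAt f A x ↔ ∀ h, HasLineDerivAt ℝ f (A h) x h :=
  forall_congr' fun _ => hasLineDerivAt_iff_tendsto_slope_zero.symm

theorem HasGateauxDerivAt.unique (hA : HasGateauxDerivAt f A x) (hB : HasGateauxDerivAt f B x) :
    A = B :=
  ContinuousLinearMap.ext fun h =>
    (hasGateauxDerivAt_iff_hasLineDerivAt.1 hA h).unique
      (hasGateauxDerivAt_iff_hasLineDerivAt.1 hB h)

theorem hasGateauxDerivAt_of_hasFDerivAt (hf : HasFDerivAt f A x) : HasGateauxDerivAt f A x :=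
  hasGateauxDerivAt_iff_hasLineDerivAt.2 hf.hasLineDerivAt

theorem gateauxDifferentiableAt_of_differentiableAt (hf : DifferentiableAt ℝ f x) :
    GateauxDifferentiableAt f x :=
  ⟨fderiv ℝ f x, hasGateauxDerivAt_of_hasFDerivAt hf.hasFDerivAt⟩

theorem HasGateauxDerivAt.comp_continuousLinearMap (T : Y →L[ℝ] X) {y : Y}
    (hf : HasGateauxDerivAt f A (T y)) : HasGateauxDerivAt (f ∘ T) (A.comp T) y := fun h => by
  simpa using hf (T h)

end GateauxDerivative

theorem tendstoUniformlyOn_of_uniformEquicontinuous_of_totallyBounded {ι α β : Type*}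
    [UniformSpace α] [UniformSpace β] {F : ι → α → β} {f : α → β} {l : Filter ι} {s : Set α}
    (hF : UniformEquicontinuous F) (hf : UniformContinuous f) (hs : TotallyBounded s)
    (hlim : ∀ x ∈ s, Tendsto (F · x) l (𝓝 (f x))) : TendstoUniformlyOn F f l s := by
  intro V hV
  obtain ⟨W, hW, hWsymm, hWV⟩ := comp_comp_symm_mem_uniformity_sets hV
  obtain ⟨c, hcs, hc, hcover⟩ := hs.exists_subset (inter_mem (hF W hW) (hf hW))
  filter_upwards [(eventually_all_finite hc).2 fun y hy =>
    hlim y (hcs hy) (UniformSpace.ball_mem_nhds (f y) hW)] with i hi x hx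
  obtain ⟨y, hyc, hFxy, hfxy⟩ := Set.mem_iUnion₂.1 (hcover hx)
  exact hWV ⟨F i y, ⟨f y, hfxy, hi y hyc⟩, hWsymm.symm _ _ (hFxy i)⟩

section CompositionWithCompact
variable {X Y Z : Type*} [NormedAddCommGroup X] [NormedSpace ℝ X]
  [NormedAddCommGroup Y] [NormedSpace ℝ Y] [NormedAddCommGroup Z] [NormedSpace ℝ Z]

theorem lipschitzWith_differenceQuotient {f : X → Z} {K : NNReal} (hf : LipschitzWith K f)
    (x : X) (t : ℝ) : LipschitzWith K fun u => t⁻¹ • (f (x + t • u) - f x) := by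
  refine .of_dist_le_mul fun u v => ?_
  rcases eq_or_ne t 0 with rfl | ht
  · simpa using by positivity
  calc dist (t⁻¹ • (f (x + t • u) - f x)) (t⁻¹ • (f (x + t • v) - f x))
      = |t|⁻¹ * dist (f (x + t • u)) (f (x + t • v)) := by
        rw [dist_smul₀, dist_sub_right, norm_inv, Real.norm_eq_abs]
    _ ≤ |t|⁻¹ * (K * (|t| * dist u v)) := by
        gcongr
        simpa [dist_smul₀] using hf.dist_le_mul (x + t • u) (x + t • v)
    _ = K * dist u v := by field_simp

theorem HasGateauxDerivAt.tendstoUniformlyOn {f : X → Z} {A : X →L[ℝ] Z} {x : X} {K : NNReal}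
    {s : Set X} (hA : HasGateauxDerivAt f A x) (hf : LipschitzWith K f) (hs : TotallyBounded s) :
    TendstoUniformlyOn (fun (t : ℝ) u => t⁻¹ • (f (x + t • u) - f x)) A (𝓝[≠] 0) s :=
  tendstoUniformlyOn_of_uniformEquicontinuous_of_totallyBounded
    (LipschitzWith.uniformEquicontinuous _ K (lipschitzWith_differenceQuotient hf x))
    A.uniformContinuous hs fun u _ => hA u

theorem hasFDerivAt_of_tendstoUniformlyOn_sphere {f : X → Z} {A : X →L[ℝ] Z} {x : X}
    (h : TendstoUniformlyOn (fun (t : ℝ) u => t⁻¹ • (f (x + t • u) - f x)) A (𝓝[≠] 0)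
      (sphere 0 1)) : HasFDerivAt f A x := by
  rw [hasFDerivAt_iff_isLittleO_nhds_zero, Asymptotics.isLittleO_iff]
  intro ε hε
  have hquot := eventually_nhdsWithin_iff.1 (Metric.tendstoUniformlyOn_iff.1 h ε hε)
  filter_upwards [tendsto_norm_zero.eventually hquot] with k hk
  rcases eq_or_ne k 0 with rfl | hk0
  · simp
  have hnorm : ‖k‖ ≠ 0 := norm_ne_zero_iff.2 hk0
  have hdir : ‖k‖ • ‖k‖⁻¹ • k = k := smul_inv_smul₀ hnorm k
  have hclose := hk hnorm (‖k‖⁻¹ • k) (by simp [norm_smul, hnorm])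
  rw [hdir, map_smul, dist_comm, dist_smul₀, norm_inv, norm_norm, dist_eq_norm,
    inv_mul_lt_iff₀ (norm_pos_iff.2 hk0)] at hclose
  exact (hclose.trans_eq (mul_comm _ _)).le

theorem HasGateauxDerivAt.hasFDerivAt_comp {f : X → Z} {A : X →L[ℝ] Z} {K : NNReal}
    {T : Y →L[ℝ] X} {y : Y} (hA : HasGateauxDerivAt f A (T y)) (hf : LipschitzWith K f)
    (hT : TotallyBounded (T '' closedBall 0 1)) : HasFDerivAt (f ∘ T) (A.comp T) y := by
  refine hasFDerivAt_of_tendstoUniformlyOn_sphere ?_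
  have hunif := ((hA.tendstoUniformlyOn hf hT).comp T).mono
    (sphere_subset_closedBall.trans (Set.subset_preimage_image T _))
  simpa [Function.comp_def, ContinuousLinearMap.coe_comp] using hunif

end CompositionWithCompact

section SmoothBump
open MeasureTheory Convolution ContinuousLinearMap ContDiff

theorem lipschitzWith_convolution {G F : Type*} [NormedAddCommGroup G] [MeasurableSpace G]
    [BorelSpace G] [NormedAddCommGroup F] [NormedSpace ℝ F] [SecondCountableTopologyEither G F]
    {μ : Measure G} [IsLocallyFiniteMeasure μ] [μ.IsAddLeftInvariant] [μ.IsNegInvariant]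
    {f : G → ℝ} {g : G → F} {K : NNReal} (hf : Continuous f) (hfs : HasCompactSupport f)
    (hf0 : ∀ x, 0 ≤ f x) (hf1 : ∫ x, f x ∂μ = 1) (hg : LipschitzWith K g) :
    LipschitzWith K (f ⋆[lsmul ℝ ℝ, μ] g) := by
  have hex : ConvolutionExists f g (lsmul ℝ ℝ) μ :=
    hfs.convolutionExists_left _ hf hg.continuous.locallyIntegrable
  refine .of_dist_le_mul fun x y => ?_
  have hpointwise (s : G) : ‖f s • g (x - s) - f s • g (y - s)‖ ≤ f s * (K * dist x y) := by
    rw [← smul_sub, norm_smul, Real.norm_of_nonneg (hf0 s), ← dist_eq_norm]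
    gcongr
    · exact hf0 s
    · simpa using hg.dist_le_mul (x - s) (y - s)
  calc dist ((f ⋆[lsmul ℝ ℝ, μ] g) x) ((f ⋆[lsmul ℝ ℝ, μ] g) y)
      = ‖∫ s, (f s • g (x - s) - f s • g (y - s)) ∂μ‖ := by
        rw [dist_eq_norm]
        exact congrArg _ (integral_sub (hex x) (hex y)).symm
    _ ≤ ∫ s, f s * (K * dist x y) ∂μ :=
        norm_integral_le_of_norm_le ((integrable_of_integral_eq_one hf1).mul_const _)
          (.of_forall hpointwise)
    _ = K * dist x y := by rw [integral_mul_const, hf1, one_mul]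

variable {E : Type*} [NormedAddCommGroup E] [NormedSpace ℝ E] [FiniteDimensional ℝ E]

theorem exists_contDiff_lipschitzWith_dist_le_of_forall_mem_ball_dist_le {F : Type*}
    [NormedAddCommGroup F] [NormedSpace ℝ F] [CompleteSpace F] {f : E → F} {K : NNReal} {ε : ℝ}
    (hf : LipschitzWith K f) (hε : 0 < ε) :
    ∃ g : E → F, ContDiff ℝ ∞ g ∧ LipschitzWith K g ∧
      ∀ a z δ, 0 ≤ δ → (∀ x ∈ ball a ε, dist (f x) z ≤ δ) → dist (g a) z ≤ δ := by
  borelize E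
  let φ : ContDiffBump (0 : E) := ⟨ε / 2, ε, half_pos hε, half_lt_self hε⟩
  refine ⟨φ.normed .addHaar ⋆[lsmul ℝ ℝ, .addHaar] f,
    φ.hasCompactSupport_normed.contDiff_convolution_left _ φ.contDiff_normed
      hf.continuous.locallyIntegrable,
    lipschitzWith_convolution φ.continuous_normed φ.hasCompactSupport_normed φ.nonneg_normed
      φ.integral_normed hf, fun a z δ hδ hfz => ?_⟩
  exact dist_convolution_le hδ φ.support_normed_eq.subset φ.nonneg_normed φ.integral_normed
    hf.continuous.aestronglyMeasurable hfz

theorem exists_contDiff_lipschitzWith_eq_one_support_subset_thickening (A : Set E) {δ : ℝ}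
    (hδ : 0 < δ) :
    ∃ g : E → ℝ, ContDiff ℝ ∞ g ∧ LipschitzWith (δ / 3).toNNReal⁻¹ g ∧
      (∀ x, g x ∈ Set.Icc 0 1) ∧ g.support ⊆ thickening δ A ∧ ∀ x ∈ A, g x = 1 := by
  have hδ3 : 0 < δ / 3 := by positivity
  let f (x : E) : ℝ := thickenedIndicator hδ3 (thickening (δ / 3) A) x
  have hfLip : LipschitzWith (δ / 3).toNNReal⁻¹ f := lipschitzWith_thickenedIndicator hδ3 _
  obtain ⟨g, hgsmooth, hgLip, hg⟩ :=
    exists_contDiff_lipschitzWith_dist_le_of_forall_mem_ball_dist_le hfLip hδ3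
  have hgconst (a : E) (z : ℝ) (hz : ∀ x ∈ ball a (δ / 3), f x = z) : g a = z :=
    dist_le_zero.1 (hg a z 0 le_rfl fun x hx => (dist_eq_zero.2 (hz x hx)).le)
  refine ⟨g, hgsmooth, hgLip, fun x => ?_, fun x hx => ?_, fun x hx => ?_⟩
  · have hf01 (y : E) : dist (f y) (1 / 2) ≤ 1 / 2 := by
      have hle : f y ≤ 1 := thickenedIndicator_le_one hδ3 _ y
      have hge : 0 ≤ f y := NNReal.coe_nonneg _
      rw [Real.dist_eq, abs_le]
      constructor <;> linarith
    have hgx := abs_le.1 (hg x (1 / 2) (1 / 2) (by norm_num) fun y _ => hf01 y)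
    constructor <;> linarith
  · by_contra hxA
    refine hx (hgconst x 0 fun y hy => ?_)
    have hyA : y ∉ thickening (δ / 3) (thickening (δ / 3) A) := fun hyA => hxA <| by
      have hx3 := thickening_thickening_subset _ _ _ (ball_subset_thickening hyA _
        (mem_ball_comm.1 hy))
      have hx3' := thickening_thickening_subset _ _ _ hx3
      rwa [add_thirds] at hx3'
    exact NNReal.coe_eq_zero.2 (thickenedIndicator_zero hδ3 _ hyA)
  · refine hgconst x 1 fun y hy => ?_
    have hyA : y ∈ thickening (δ / 3) A := ball_subset_thickening hx _ hy
    exact NNReal.coe_eq_one.2 (thickenedIndicator_one hδ3 _ hyA)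

theorem exists_contDiff_lipschitzWith_six_support_subset_ball (c : E) {r : ℝ} (hr : 0 < r) :
    ∃ g : E → ℝ, ContDiff ℝ ∞ g ∧ LipschitzWith 6 g ∧ (∀ x, g x ∈ Set.Icc 0 r) ∧
      g.support ⊆ ball c r ∧ ∀ x ∈ closedBall c (r / 2), g x = r := by
  obtain ⟨g, hgsmooth, hgLip, hg01, hgsupp, hgone⟩ :=
    exists_contDiff_lipschitzWith_eq_one_support_subset_thickening (closedBall c (r / 2))
      (half_pos hr)
  rw [thickening_closedBall (half_pos hr) (half_pos hr).le, add_halves] at hgsupp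
  refine ⟨r • g, hgsmooth.const_smul r, .of_dist_le_mul fun x y => ?_, fun x => ?_,
    (Function.support_const_smul_subset r g).trans hgsupp, fun x hx => by simp [hgone x hx]⟩
  · calc dist (r • g x) (r • g y) = r * dist (g x) (g y) := by
          rw [dist_smul₀, Real.norm_of_nonneg hr.le]
      _ ≤ r * ((r / 2 / 3)⁻¹ * dist x y) := by
          gcongr
          simpa only [NNReal.coe_inv, Real.coe_toNNReal _ (by positivity : 0 ≤ r / 2 / 3)]
            using hgLip.dist_le_mul x y
      _ = 6 * dist x y := by field_simp; ring
  · exact ⟨mul_nonneg hr.le (hg01 x).1, mul_le_of_le_one_right hr.le (hg01 x).2⟩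

end SmoothBump

section DisjointSupports
open scoped Function
variable {ι α : Type*}

section AddCommMonoid
variable {M : Type*} [AddCommMonoid M] [TopologicalSpace M] {b : ι → α → M}

theorem tsum_eq_of_mem_support (hb : Pairwise (Disjoint on fun i => (b i).support))
    {i : ι} {x : α} (hx : x ∈ (b i).support) : ∑' j, b j x = b i x :=
  tsum_eq_single i fun _ hji =>
    Function.notMem_support.1 fun hxj => Set.disjoint_left.1 (hb hji) hxj hx

theorem exists_tsum_eq_of_disjoint_support [Nonempty ι]
    (hb : Pairwise (Disjoint on fun i => (b i).support)) (x : α) :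
    ∃ i, ∑' j, b j x = b i x := by
  by_cases hx : ∃ i, x ∈ (b i).support
  · exact hx.imp fun _ => tsum_eq_of_mem_support hb
  · have hzero (i : ι) : b i x = 0 := Function.notMem_support.1 fun hi => hx ⟨i, hi⟩
    exact ⟨Classical.arbitrary ι, by simp [hzero]⟩

end AddCommMonoid

variable {b : ι → α → ℝ}

theorem le_tsum_of_disjoint_support
    (hb : Pairwise (Disjoint on fun i => (b i).support)) (hb0 : ∀ i x, 0 ≤ b i x)
    (i : ι) (x : α) : b i x ≤ ∑' j, b j x := by
  by_cases hx : x ∈ (b i).support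
  · exact (tsum_eq_of_mem_support hb hx).ge
  · exact (Function.notMem_support.1 hx).trans_le (tsum_nonneg fun j => hb0 j x)

theorem lipschitzWith_tsum_of_disjoint_support [Nonempty ι] [PseudoMetricSpace α] {K : NNReal}
    (hb : Pairwise (Disjoint on fun i => (b i).support)) (hb0 : ∀ i x, 0 ≤ b i x)
    (hK : ∀ i, LipschitzWith K (b i)) : LipschitzWith K fun x => ∑' i, b i x := by
  refine .of_le_add_mul K fun x y => ?_
  obtain ⟨i, hi⟩ := exists_tsum_eq_of_disjoint_support hb x
  calc ∑' j, b j x = b i x := hi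
    _ ≤ b i y + K * dist x y := (hK i).le_add_mul x y
    _ ≤ ∑' j, b j y + K * dist x y := by
        gcongr
        exact le_tsum_of_disjoint_support hb hb0 i y

end DisjointSupports

theorem exists_forall_le_two_mul_of_bddAbove {ι : Type*} [Nonempty ι] {a : ι → ℝ}
    (ha0 : ∀ i, 0 ≤ a i) (ha : BddAbove (Set.range a)) : ∃ k, ∀ i, a i ≤ 2 * a k := by
  rcases (Real.iSup_nonneg ha0).eq_or_lt with hzero | hpos
  · have hle (i : ι) : a i ≤ 0 := hzero ▸ le_ciSup ha i
    exact ⟨Classical.arbitrary ι, fun i => by linarith [hle i, ha0 (Classical.arbitrary ι)]⟩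
  · obtain ⟨k, hk⟩ := exists_lt_of_lt_ciSup (half_lt_self hpos)
    exact ⟨k, fun i => by linarith [le_ciSup ha i]⟩

section LeadRegion
open scoped Function
variable {X : Type*} [NormedAddCommGroup X] [NormedSpace ℝ X]
  {φ : ℕ → X →L[ℝ] ℝ} {t : ℕ → ℝ} {r : ℝ} {n : ℕ} {x : X}

/-- The points at which `φ n` leads the sequence of functionals `φ` at scale `r`: it exceeds `2 * r`
there, while all its predecessors have absolute value below `r`. Bumps with supports in the regions
`leadRegion φ (t n) n` can be summed without interfering with each other. -/
def leadRegion (φ : ℕ → X →L[ℝ] ℝ) (r : ℝ) (n : ℕ) : Set X :=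
  {x | 2 * r < φ n x ∧ ∀ j < n, |φ j x| < r}

theorem pairwise_disjoint_leadRegion (ht : Antitone t) :
    Pairwise (Disjoint on fun n => leadRegion φ (t n) n) := by
  refine (pairwise_disjoint_on _).2 fun m n hmn => Set.disjoint_left.2 fun x hxm hxn => ?_
  have hlead := hxm.1
  have hsmall := hxn.2 m hmn
  linarith [ht hmn.le, le_abs_self (φ m x), abs_nonneg (φ m x)]

theorem exists_bump_support_subset_leadRegion (hφ : ∀ n, ‖φ n‖ ≤ 1) (hr : 0 < r) (n : ℕ) :
    ∃ b : X → ℝ, Differentiable ℝ b ∧ LipschitzWith 6 b ∧ (∀ x, b x ∈ Set.Icc 0 r) ∧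
      b.support ⊆ leadRegion φ r n ∧
      ∀ x, φ n x = 1 → (∀ j < n, |φ j x| ≤ 1 / 6) → b ((3 * r) • x) = r := by
  let L : X →L[ℝ] ℝ × (Fin n → ℝ) := (φ n).prod (.pi fun j => φ j)
  have hL (x : X) : ‖L x‖ ≤ 1 * ‖x‖ :=
    max_le ((φ n).le_of_opNorm_le (hφ n) x) <|
      (pi_norm_le_iff_of_nonneg (by positivity)).2 fun j => (φ j).le_of_opNorm_le (hφ j) x
  obtain ⟨g, hgsmooth, hgLip, hgIcc, hgsupp, hgcore⟩ :=
    exists_contDiff_lipschitzWith_six_support_subset_ball ((3 * r, 0) : ℝ × (Fin n → ℝ)) hr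
  have hgL := hgLip.comp (AddMonoidHomClass.lipschitz_of_bound_nnnorm L 1 hL)
  refine ⟨g ∘ L, (hgsmooth.differentiable (by simp)).comp L.differentiable, by simpa using hgL,
    fun x => hgIcc (L x), fun x hx => ?_, fun x hxn hxj => hgcore _ ?_⟩
  · have hLx : L x ∈ ball (3 * r) r ×ˢ ball 0 r :=
      (ball_prod_same (3 * r) (0 : Fin n → ℝ) r).symm ▸ hgsupp (Function.mem_support.2 hx)
    have hlead : |φ n x - 3 * r| < r := hLx.1
    refine ⟨by linarith [(abs_lt.1 hlead).1], fun j hj => ?_⟩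
    exact (pi_norm_lt_iff hr).1 (mem_ball_zero_iff.1 hLx.2) ⟨j, hj⟩
  · rw [← closedBall_prod_same]
    refine ⟨by simpa [L, hxn] using by positivity, mem_closedBall_zero_iff.2 ?_⟩
    refine (pi_norm_le_iff_of_nonneg (half_pos hr).le).2 fun j => ?_
    calc ‖φ j ((3 * r) • x)‖ = 3 * r * |φ j x| := by
          rw [map_smul, norm_smul, Real.norm_of_nonneg (by positivity), Real.norm_eq_abs]
      _ ≤ 3 * r * (1 / 6) := by gcongr; exact hxj j j.2
      _ = r / 2 := by ring

theorem eventually_forall_add_smul_notMem_leadRegion (ht : Antitone t) (ht0 : ∀ n, 0 < t n)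
    {h : X} (hx : ∀ j, φ j x = 0) (hh : BddAbove (Set.range fun n => |φ n h|)) :
    ∀ᶠ s in 𝓝 (0 : ℝ), ∀ n, x + s • h ∉ leadRegion φ (t n) n := by
  obtain ⟨k, hk⟩ := exists_forall_le_two_mul_of_bddAbove (fun n => abs_nonneg (φ n h)) hh
  have hlim : Tendsto (fun s : ℝ => |s| * |φ k h|) (𝓝 0) (𝓝 0) :=
    Continuous.tendsto' (by fun_prop) _ _ (by simp)
  filter_upwards [hlim.eventually_lt_const (ht0 k)] with s hs n hmem
  have heval (j : ℕ) : |φ j (x + s • h)| = |s| * |φ j h| := by simp [hx j, abs_mul]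
  have hlead : 2 * t n < 2 * (|s| * |φ k h|) :=
    calc 2 * t n < |φ n (x + s • h)| := hmem.1.trans_le (le_abs_self _)
      _ ≤ |s| * (2 * |φ k h|) := by rw [heval]; gcongr; exact hk n
      _ = 2 * (|s| * |φ k h|) := by ring
  -- If `k < n`, then the constraint `|φ k| < t n` contradicts `hlead`; if `n ≤ k`, then the level
  -- `2 * t n ≥ 2 * t k` is out of reach for small `s`.
  rcases lt_or_ge k n with hkn | hnk
  · linarith [heval k ▸ hmem.2 k hkn]
  · linarith [ht hnk]

theorem exists_eventually_forall_ge_notMem_leadRegion (ht : Tendsto t atTop (𝓝 0)) {j : ℕ}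
    (hx : φ j x ≠ 0) : ∃ N, ∀ᶠ y in 𝓝 x, ∀ n ≥ N, y ∉ leadRegion φ (t n) n := by
  have habs : 0 < |φ j x| / 2 := half_pos (abs_pos.2 hx)
  obtain ⟨N, hN⟩ := eventually_atTop.1
    ((ht.eventually_lt_const habs).and (eventually_gt_atTop j))
  have hlim : Tendsto (fun y => |φ j y|) (𝓝 x) (𝓝 |φ j x|) := (φ j).continuous.abs.tendsto x
  refine ⟨N, ?_⟩
  filter_upwards [hlim.eventually_const_lt (half_lt_self (abs_pos.2 hx))] with y hy n hn hmem
  linarith [(hN n hn).1, hmem.2 j (hN n hn).2]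

section TsumOfBumps
variable {b : ℕ → X → ℝ}

theorem pairwise_disjoint_support_of_subset_leadRegion (ht : Antitone t)
    (hsupp : ∀ n, (b n).support ⊆ leadRegion φ (t n) n) :
    Pairwise (Disjoint on fun n => (b n).support) :=
  (pairwise_disjoint_leadRegion ht).mono fun m n hmn => hmn.mono (hsupp m) (hsupp n)

theorem hasGateauxDerivAt_tsum_of_support_subset_leadRegion (ht : Antitone t)
    (ht0 : ∀ n, 0 < t n) (hsupp : ∀ n, (b n).support ⊆ leadRegion φ (t n) n)
    (hφ : ∀ h, BddAbove (Set.range fun n => |φ n h|)) (hx : ∀ j, φ j x = 0) :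
    HasGateauxDerivAt (fun y => ∑' n, b n y) 0 x := by
  intro h
  have hzero {y : X} (hy : ∀ n, y ∉ leadRegion φ (t n) n) : ∑' n, b n y = 0 :=
    (tsum_congr fun n => Function.notMem_support.1 (mt (@hsupp n y) (hy n))).trans tsum_zero
  have hev := eventually_forall_add_smul_notMem_leadRegion ht ht0 hx (hφ h)
  have hx0 : ∑' n, b n x = 0 := hzero (by simpa using hev.self_of_nhds)
  refine tendsto_const_nhds.congr' ?_
  filter_upwards [hev.filter_mono nhdsWithin_le_nhds] with s hs
  simp [hx0, hzero hs]

theorem differentiableAt_tsum_of_support_subset_leadRegion (ht : Tendsto t atTop (𝓝 0))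
    (hsupp : ∀ n, (b n).support ⊆ leadRegion φ (t n) n) (hb : ∀ n, DifferentiableAt ℝ (b n) x)
    {j : ℕ} (hx : φ j x ≠ 0) : DifferentiableAt ℝ (fun y => ∑' n, b n y) x := by
  obtain ⟨N, hN⟩ := exists_eventually_forall_ge_notMem_leadRegion ht hx
  have hfinite : (fun y => ∑' n, b n y) =ᶠ[𝓝 x] fun y => ∑ n ∈ Finset.range N, b n y := by
    filter_upwards [hN] with y hy
    refine tsum_eq_sum fun n hn => Function.notMem_support.1 (mt (@hsupp n y) (hy n ?_))
    simpa using hn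
  exact (DifferentiableAt.fun_sum fun n _ => hb n).congr_of_eventuallyEq hfinite

theorem memCbG_tsum_of_support_subset_leadRegion {K : NNReal} (ht : Antitone t)
    (ht0 : ∀ n, 0 < t n) (htlim : Tendsto t atTop (𝓝 0))
    (hφ : ∀ h, BddAbove (Set.range fun n => |φ n h|)) (hb : ∀ n, Differentiable ℝ (b n))
    (hLip : ∀ n, LipschitzWith K (b n)) (hIcc : ∀ n x, b n x ∈ Set.Icc 0 (t n))
    (hsupp : ∀ n, (b n).support ⊆ leadRegion φ (t n) n) : MemCbG fun x => ∑' n, b n x := by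
  have hdisj := pairwise_disjoint_support_of_subset_leadRegion ht hsupp
  have hb0 (n : ℕ) (x : X) : 0 ≤ b n x := (hIcc n x).1
  refine ⟨⟨t 0, fun x => ?_⟩, ⟨K, lipschitzWith_tsum_of_disjoint_support hdisj hb0 hLip⟩,
    fun x => ?_⟩
  · obtain ⟨i, hi⟩ := exists_tsum_eq_of_disjoint_support hdisj x
    calc |∑' n, b n x| = b i x := by rw [hi, abs_of_nonneg (hb0 i x)]
      _ ≤ t i := (hIcc i x).2
      _ ≤ t 0 := ht i.zero_le
  · by_cases hx : ∀ j, φ j x = 0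
    · exact ⟨0, hasGateauxDerivAt_tsum_of_support_subset_leadRegion ht ht0 hsupp hφ hx⟩
    · obtain ⟨j, hj⟩ := not_forall.1 hx
      exact gateauxDifferentiableAt_of_differentiableAt
        (differentiableAt_tsum_of_support_subset_leadRegion htlim hsupp (fun n => hb n x) hj)

end TsumOfBumps

theorem exists_memCbG_hasGateauxDerivAt_zero_le_apply_smul (hφ : ∀ n, ‖φ n‖ ≤ 1) :
    ∃ (f : X → ℝ) (t : ℕ → ℝ), MemCbG f ∧ f 0 = 0 ∧ HasGateauxDerivAt f 0 0 ∧ (∀ n, 0 < t n) ∧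
      Tendsto t atTop (𝓝 0) ∧
      ∀ n x, φ n x = 1 → (∀ j < n, |φ j x| ≤ 1 / 6) → t n ≤ f ((3 * t n) • x) := by
  let t (n : ℕ) : ℝ := (1 / 2) ^ n
  have ht0 (n : ℕ) : 0 < t n := by positivity
  have ht : Antitone t := pow_right_anti₀ (by norm_num) (by norm_num)
  have htlim : Tendsto t atTop (𝓝 0) :=
    tendsto_pow_atTop_nhds_zero_of_lt_one (by norm_num) (by norm_num)
  have hbdd (h : X) : BddAbove (Set.range fun n => |φ n h|) :=
    ⟨‖h‖, Set.forall_mem_range.2 fun n => by simpa using (φ n).le_of_opNorm_le (hφ n) h⟩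
  choose b hb hLip hIcc hsupp hpeak using fun n =>
    exists_bump_support_subset_leadRegion hφ (ht0 n) n
  refine ⟨fun x => ∑' n, b n x, t,
    memCbG_tsum_of_support_subset_leadRegion ht ht0 htlim hbdd hb hLip hIcc hsupp, ?_,
    hasGateauxDerivAt_tsum_of_support_subset_leadRegion ht ht0 hsupp hbdd (by simp), ht0, htlim,
    fun n x hxn hxj => ?_⟩
  · have hb00 (n : ℕ) : b n 0 = 0 :=
      Function.notMem_support.1 fun h0 => by linarith [ht0 n, (φ n).map_zero ▸ (hsupp n h0).1]
    simp [hb00]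
  · have hdisj := pairwise_disjoint_support_of_subset_leadRegion ht hsupp
    exact (hpeak n x hxn hxj).ge.trans
      (le_tsum_of_disjoint_support hdisj (fun n x => (hIcc n x).1) n _)

end LeadRegion

theorem exists_finite_image_subset_iUnion_ball {α β γ : Type*} [PseudoMetricSpace β]
    [PseudoMetricSpace γ] {Φ : α → β} {g : α → γ} {s : Set α} {δ ε : ℝ} (hδ : 0 < δ)
    (hΦ : TotallyBounded (Φ '' s))
    (h : ∀ a ∈ s, ∀ b ∈ s, dist (Φ a) (Φ b) < δ → dist (g a) (g b) < ε) :
    ∃ c : Set γ, c.Finite ∧ g '' s ⊆ ⋃ y ∈ c, ball y ε := by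
  obtain ⟨c, hcs, hc, hcover⟩ := Set.exists_subset_image_finite_and.1
    (Metric.finite_approx_of_totallyBounded hΦ δ hδ)
  refine ⟨g '' c, hc.image g, Set.image_subset_iff.2 fun a ha => ?_⟩
  obtain ⟨b, hb, hab⟩ := Set.mem_iUnion₂.1
    (Set.biUnion_image ▸ hcover (Set.mem_image_of_mem Φ ha))
  exact Set.mem_biUnion (Set.mem_image_of_mem g hb) (h a ha b (hcs hb) hab)

section AlmostBiorthogonal
variable {X Y : Type*} [NormedAddCommGroup X] [NormedSpace ℝ X]
  [NormedAddCommGroup Y] [NormedSpace ℝ Y] {T : Y →L[ℝ] X} {δ ε : ℝ}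

theorem exists_le_norm_apply_forall_abs_lt (hδ : 0 < δ)
    (hT : ¬∃ c : Set X, c.Finite ∧ T '' closedBall 0 1 ⊆ ⋃ x ∈ c, ball x ε)
    (F : Finset (X →L[ℝ] ℝ)) : ∃ w : Y, ‖w‖ ≤ 2 ∧ ε ≤ ‖T w‖ ∧ ∀ ψ ∈ F, |ψ (T w)| < δ := by
  by_contra! hcon
  let Φ : Y →L[ℝ] F → ℝ := .pi fun ψ => ψ.1.comp T
  have hΦ : TotallyBounded (Φ '' closedBall 0 1) :=
    (isBounded_closedBall.image Φ).isCompact_closure.totallyBounded.subset subset_closure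
  refine hT (exists_finite_image_subset_iUnion_ball hδ hΦ fun y hy y' hy' hΦy => ?_)
  by_contra! hTy
  have hnorm : ‖y - y'‖ ≤ 2 := by
    rw [mem_closedBall_zero_iff] at hy hy'
    linarith [norm_sub_le y y']
  obtain ⟨ψ, hψ, hlarge⟩ := hcon (y - y') hnorm (by rwa [map_sub, ← dist_eq_norm])
  refine hlarge.not_gt ((dist_le_pi_dist (Φ y) (Φ y') ⟨ψ, hψ⟩).trans_lt hΦy |>.trans_eq' ?_)
  simp [Φ, Real.dist_eq]

theorem exists_apply_eq_one_forall_abs_le (hδ : 0 < δ) (hε : 0 < ε)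
    (hT : ¬∃ c : Set X, c.Finite ∧ T '' closedBall 0 1 ⊆ ⋃ x ∈ c, ball x ε)
    (F : Finset (X →L[ℝ] ℝ)) :
    ∃ (y : Y) (φ : X →L[ℝ] ℝ), ‖φ‖ ≤ 1 ∧ ‖y‖ ≤ 2 / ε ∧ φ (T y) = 1 ∧
      ∀ ψ ∈ F, |ψ (T y)| ≤ δ := by
  obtain ⟨w, hw, hTw, hF⟩ := exists_le_norm_apply_forall_abs_lt (mul_pos hδ hε) hT F
  have hTw0 : 0 < ‖T w‖ := hε.trans_le hTw
  obtain ⟨φ, hφ, hφw⟩ := exists_dual_vector'' ℝ (T w)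
  refine ⟨‖T w‖⁻¹ • w, φ, hφ, ?_, ?_, fun ψ hψ => ?_⟩
  · rw [norm_smul, norm_inv, norm_norm, inv_mul_eq_div]
    gcongr
  · simp [hφw, hTw0.ne']
  · rw [map_smul, map_smul, smul_eq_mul, abs_mul, abs_inv, abs_norm, inv_mul_le_iff₀ hTw0]
    calc |ψ (T w)| ≤ δ * ε := (hF ψ hψ).le
      _ ≤ ‖T w‖ * δ := by rw [mul_comm]; gcongr

theorem exists_seq_apply_eq_one_forall_lt_abs_le (hδ : 0 < δ)
    (hT : ¬TotallyBounded (T '' closedBall 0 1)) :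
    ∃ (C : ℝ) (y : ℕ → Y) (φ : ℕ → X →L[ℝ] ℝ), (∀ n, ‖φ n‖ ≤ 1) ∧ (∀ n, ‖y n‖ ≤ C) ∧
      (∀ n, φ n (T (y n)) = 1) ∧ ∀ n, ∀ j < n, |φ j (T (y n))| ≤ δ := by
  classical
  rw [Metric.totallyBounded_iff] at hT
  obtain ⟨ε, hT⟩ := not_forall.1 hT
  obtain ⟨hε, hT⟩ := Classical.not_imp.1 hT
  obtain ⟨p, hp, hp_lt⟩ := exists_seq_of_forall_finset_exists
    (fun p : Y × (X →L[ℝ] ℝ) => ‖p.2‖ ≤ 1 ∧ ‖p.1‖ ≤ 2 / ε ∧ p.2 (T p.1) = 1)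
    (fun p q => |p.2 (T q.1)| ≤ δ) fun s _ => by
      obtain ⟨y, φ, hφ, hy, hone, hsmall⟩ :=
        exists_apply_eq_one_forall_abs_le hδ hε hT (s.image Prod.snd)
      exact ⟨(y, φ), ⟨hφ, hy, hone⟩, fun q hq => hsmall _ (Finset.mem_image_of_mem _ hq)⟩
  exact ⟨2 / ε, fun n => (p n).1, fun n => (p n).2, fun n => (hp n).1, fun n => (hp n).2.1,
    fun n => (hp n).2.2, fun n j => hp_lt j n⟩

end AlmostBiorthogonal

open Asymptotics in
theorem not_hasFDerivAt_zero_of_isBigO_comp {ι E F : Type*} [NormedAddCommGroup E]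
    [NormedSpace ℝ E] [NormedAddCommGroup F] [NormedSpace ℝ F] {l : Filter ι} {g : E → F}
    {v : ι → E} {t : ι → ℝ} (hg0 : g 0 = 0) (hv : v =O[l] t) (hgv : t =O[l] (g ∘ v))
    (htlim : Tendsto t l (𝓝 0)) (ht : ∃ᶠ i in l, t i ≠ 0) :
    ¬HasFDerivAt g (0 : E →L[ℝ] F) 0 := fun hg => by
  have hlittle : g =o[𝓝 0] fun k => k := by
    simpa [hg0] using hasFDerivAt_iff_isLittleO_nhds_zero.1 hg
  have hgv_little : (g ∘ v) =o[l] v := hlittle.comp_tendsto (hv.trans_tendsto htlim)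
  exact Asymptotics.isLittleO_irrefl ht (hgv.trans_isLittleO (hgv_little.trans_isBigO hv))

theorem exists_strongDual_apply_ne_zero_of_notMem_closure {𝕜 E : Type*} [RCLike 𝕜]
    [NormedAddCommGroup E] [NormedSpace 𝕜 E] {p : Submodule 𝕜 E} {x : E}
    (hx : x ∉ closure (p : Set E)) : ∃ φ : E →L[𝕜] 𝕜, φ x ≠ 0 ∧ ∀ y ∈ p, φ y = 0 := by
  have : IsClosed (p.topologicalClosure : Set E) := p.isClosed_topologicalClosure
  have hx0 : p.topologicalClosure.mkQL x ≠ 0 := mt (Submodule.Quotient.mk_eq_zero _).1 hx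
  obtain ⟨ψ, hψ⟩ := SeparatingDual.exists_ne_zero (R := 𝕜) hx0
  refine ⟨ψ.comp p.topologicalClosure.mkQL, hψ, fun y hy => ?_⟩
  have hy0 : p.topologicalClosure.mkQL y = 0 :=
    (Submodule.Quotient.mk_eq_zero _).2 (p.le_topologicalClosure hy)
  rw [ContinuousLinearMap.comp_apply, hy0, map_zero]

section Composition
variable {X Y : Type*} [NormedAddCommGroup X] [NormedSpace ℝ X]
  [NormedAddCommGroup Y] [NormedSpace ℝ Y] {T : Y →L[ℝ] X}

theorem MemCbG.memCbF_comp {f : X → ℝ} (hf : MemCbG f)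
    (hT : TotallyBounded (T '' closedBall 0 1)) : MemCbF (f ∘ T) := by
  obtain ⟨⟨C, hC⟩, ⟨K, hK⟩, hG⟩ := hf
  refine ⟨⟨C, fun y => hC (T y)⟩, ⟨K * ‖T‖₊, hK.comp T.lipschitz⟩, fun y => ?_⟩
  obtain ⟨A, hA⟩ := hG (T y)
  exact (hA.hasFDerivAt_comp hK hT).differentiableAt

theorem exists_memCbG_not_differentiableAt_comp (hT : ¬TotallyBounded (T '' closedBall 0 1)) :
    ∃ f : X → ℝ, MemCbG f ∧ ¬DifferentiableAt ℝ (f ∘ T) 0 := by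
  obtain ⟨C, y, φ, hφ, hy, hone, hsmall⟩ :=
    exists_seq_apply_eq_one_forall_lt_abs_le (by norm_num : (0 : ℝ) < 1 / 6) hT
  obtain ⟨f, t, hf, hf0, hderiv, ht, htlim, hle⟩ :=
    exists_memCbG_hasGateauxDerivAt_zero_le_apply_smul hφ
  refine ⟨f, hf, fun hdiff => ?_⟩
  have hderivT : HasGateauxDerivAt (f ∘ T) ((0 : X →L[ℝ] ℝ).comp T) 0 :=
    HasGateauxDerivAt.comp_continuousLinearMap T ((map_zero T).symm ▸ hderiv)
  have hzero : HasFDerivAt (f ∘ T) (0 : Y →L[ℝ] ℝ) 0 := by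
    simpa [(hasGateauxDerivAt_of_hasFDerivAt hdiff.hasFDerivAt).unique hderivT]
      using hdiff.hasFDerivAt
  have hpeak (n : ℕ) : ‖t n‖ ≤ ‖(f ∘ T) ((3 * t n) • y n)‖ := by
    rw [Real.norm_of_nonneg (ht n).le, Function.comp_apply, map_smul]
    exact (hle n (T (y n)) (hone n) (hsmall n)).trans (le_abs_self _)
  have hvertex (n : ℕ) : ‖(3 * t n) • y n‖ ≤ 3 * C * ‖t n‖ := by
    rw [norm_smul, norm_mul, Real.norm_ofNat, mul_right_comm]
    gcongr
    exact hy n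
  exact not_hasFDerivAt_zero_of_isBigO_comp (by simp [hf0]) (.of_bound _ (.of_forall hvertex))
    (.of_bound' (.of_forall hpeak)) htlim (.of_forall fun n => (ht n).ne') hzero

theorem totallyBounded_image_closedBall_iff_forall_memCbF_comp :
    TotallyBounded (T '' closedBall 0 1) ↔ ∀ f : X → ℝ, MemCbG f → MemCbF (f ∘ T) := by
  refine ⟨fun hT f hf => hf.memCbF_comp hT, fun hcomp => ?_⟩
  by_contra hT
  obtain ⟨f, hf, hndiff⟩ := exists_memCbG_not_differentiableAt_comp hT
  exact hndiff ((hcomp f hf).2.2 0)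

theorem MemCbG.continuous {f : X → ℝ} (hf : MemCbG f) : Continuous f :=
  let ⟨_, hK⟩ := hf.2.1
  hK.continuous

theorem memCbG_sin_comp (φ : X →L[ℝ] ℝ) : MemCbG (Real.sin ∘ φ) :=
  ⟨⟨1, fun x => Real.abs_sin_le_one (φ x)⟩, ⟨1 * ‖φ‖₊, Real.lipschitzWith_sin.comp φ.lipschitz⟩,
    fun _ => gateauxDifferentiableAt_of_differentiableAt
      (Real.differentiable_sin.comp φ.differentiable _)⟩

theorem denseRange_iff_comp_injOn_memCbG :
    DenseRange T ↔ ∀ f g : X → ℝ, MemCbG f → MemCbG g → f ∘ ⇑T = g ∘ ⇑T → f = g := by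
  refine ⟨fun hT f g hf hg => hT.equalizer hf.continuous hg.continuous, fun hinj => ?_⟩
  by_contra hT
  obtain ⟨x, hx⟩ := not_forall.1 hT
  obtain ⟨φ, hφx, hφ⟩ :=
    exists_strongDual_apply_ne_zero_of_notMem_closure (p := T.range) hx
  have hcomp : (Real.sin ∘ φ) ∘ ⇑T = (Real.sin ∘ (0 : X →L[ℝ] ℝ)) ∘ ⇑T :=
    funext fun y => by simp [hφ (T y) ⟨y, rfl⟩]
  have hsin := congrFun (hinj _ _ (memCbG_sin_comp φ) (memCbG_sin_comp 0) hcomp) ((φ x)⁻¹ • x)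
  have hsin_one : Real.sin 1 = 0 := by simpa [hφx] using hsin
  exact (Real.sin_pos_of_pos_of_le_one one_pos le_rfl).ne' hsin_one

theorem isCompact_closure_iff_totallyBounded {α : Type*} [UniformSpace α] [CompleteSpace α]
    {s : Set α} : IsCompact (closure s) ↔ TotallyBounded s :=
  ⟨fun h => h.totallyBounded.subset subset_closure, fun h =>
    h.closure.isCompact_of_isClosed isClosed_closure⟩

theorem compact_denseRange_iff_composition_general (T : Y →L[ℝ] X) :
    (TotallyBounded (⇑T '' closedBall 0 1) ∧ DenseRange T) ↔
      ((∀ f : X → ℝ, MemCbG f → MemCbF (f ∘ T)) ∧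
        (∀ f g : X → ℝ, MemCbG f → MemCbG g → f ∘ ⇑T = g ∘ ⇑T → f = g)) :=
  and_congr totallyBounded_image_closedBall_iff_forall_memCbF_comp
    denseRange_iff_comp_injOn_memCbG

end Composition

/-- Let `X`, `Y` be Banach spaces and `T : Y → X` a bounded linear
operator. Then `T` is compact with dense range if and only if composition with `T` maps
every bounded Lipschitz everywhere Gâteaux differentiable function on `X` to a bounded
Lipschitz everywhere Fréchet differentiable function on `Y`, and this composition map is
injective on the class of bounded Lipschitz everywhere Gâteaux differentiable functions. -/
theorem compact_denseRange_iff_composition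
    {X Y : Type*} [NormedAddCommGroup X] [NormedSpace ℝ X] [CompleteSpace X]
    [NormedAddCommGroup Y] [NormedSpace ℝ Y] [CompleteSpace Y]
    (T : Y →L[ℝ] X) :
    (IsCompact (closure (⇑T '' closedBall 0 1)) ∧ DenseRange T) ↔
      ((∀ f : X → ℝ, MemCbG f → MemCbF (f ∘ T)) ∧
        (∀ f g : X → ℝ, MemCbG f → MemCbG g → f ∘ ⇑T = g ∘ ⇑T → f = g)) := by
  rw [isCompact_closure_iff_totallyBounded]
  exact compact_denseRange_iff_composition_general T
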